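/- Let λ > 0 be fixed, suppose E[exp(λ|ε_t|) | F_{t-1}] < ∞ almost surely for all t, and set e_t(λ) = ‖G_t‖² · E[exp(λ|ε_t|) − λ|ε_t| − 1 | F_{t-1}]. Then for any δ ∈ (0,1), with probability at least 1 − δ it holds simultaneously for all t ≥ 1 that ‖(ρI + V_t)^{-1/2} M_t‖ ≤ (Σ_{i=1}^t e_i(λ) + log(2/δ)) / λ. -/

import Mathlib

open MeasureTheory Filter Real
open scoped RealInnerProductSpace

noncomputable def outerProd {H : Type*} [NormedAddCommGroup H] [InnerProductSpace ℝ H]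
    (x : H) : H →L[ℝ] H :=
  (innerSL ℝ x).smulRight x

/-!
Absorb `λ` into the noise, and write `R n = (ρ + V n) ^ (-1 / 2)`, `M n = ∑ i ≤ n, ε i • X i` and
`ψ(x) = exp x - x - 1`. The process `exp (-∑ i ≤ n, ‖R i (X i)‖² E[ψ(|ε i|) | ℱ (i - 1)]) *
cosh ‖R n (M n)‖` is a nonnegative supermartingale started at `1`:

* `V` increases, so passing from `R n` to `R (n + 1)` can only shrink `‖R n (M n)‖`;
* `g = R (n + 1) (X (n + 1))` has norm at most `1`, and Pinelis' inequality
  `cosh ‖u + x • g‖ ≤ cosh ‖u‖ * (1 + ‖g‖² ψ(|x|)) + c * ⟪u, g⟫ * x` has a last term that is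
  linear in the noise `x`, hence vanishes in conditional expectation;
* `1 + e ≤ exp e` matches the remaining factor with the growth of the compensator.

Ville's inequality bounds this process by `1 / δ` at all times at once, outside an event of
probability `δ`, and `exp y ≤ 2 * cosh y` turns this into the claim.
-/

section ExpRemainder

/-- The function `ψ(x) = exp x - x - 1`, which measures the size of the noise. -/
noncomputable def expRemainder (x : ℝ) : ℝ := exp x - x - 1

lemma expRemainder_nonneg (x : ℝ) : 0 ≤ expRemainder x := by
  unfold expRemainder
  linarith [add_one_le_exp x]

lemma hasSum_expRemainder (x : ℝ) :
    HasSum (fun n : ℕ => x ^ (n + 2) / (n + 2).factorial) (expRemainder x) := by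
  have hexp : HasSum (fun n : ℕ => x ^ n / n.factorial) (exp x) := by
    rw [exp_eq_exp_ℝ]
    exact NormedSpace.expSeries_div_hasSum_exp x
  have htail := (hasSum_nat_add_iff' 2).2 hexp
  have hhead : exp x - ∑ i ∈ Finset.range 2, x ^ i / i.factorial = expRemainder x := by
    simp [Finset.sum_range_succ, expRemainder]
    ring
  rwa [hhead] at htail

lemma expRemainder_mul_le {s x : ℝ} (hs₀ : 0 ≤ s) (hs₁ : s ≤ 1) (hx : 0 ≤ x) :
    expRemainder (s * x) ≤ s ^ 2 * expRemainder x := by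
  refine hasSum_le (fun n => ?_) (hasSum_expRemainder (s * x))
    ((hasSum_expRemainder x).mul_left (s ^ 2))
  rw [← mul_div_assoc, mul_pow]
  gcongr ?_ * _ / _
  exact pow_le_pow_of_le_one hs₀ hs₁ (Nat.le_add_left 2 n)

end ExpRemainder

section CoshNorm

lemma convexOn_cosh_sqrt : ConvexOn ℝ (Set.Ici 0) fun x => cosh √x := by
  have hseries {z : ℝ} (hz : 0 ≤ z) :
      HasSum (fun n : ℕ => z ^ n / (2 * n).factorial) (cosh √z) := by
    simpa only [pow_mul, sq_sqrt hz] using hasSum_cosh √z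
  refine ⟨convex_Ici 0, fun x hx y hy a b ha hb hab => ?_⟩
  refine hasSum_le (fun n => ?_) (hseries (convex_Ici 0 hx hy ha hb hab))
    (((hseries hx).const_smul a).add ((hseries hy).const_smul b))
  calc (a • x + b • y) ^ n / (2 * n).factorial
      ≤ (a • x ^ n + b • y ^ n) / (2 * n).factorial := by
        gcongr
        exact (convexOn_pow n).2 hx hy ha hb hab
    _ = a • (x ^ n / (2 * n).factorial) + b • (y ^ n / (2 * n).factorial) := by
        simp only [smul_eq_mul]
        ring

variable {E : Type*} [NormedAddCommGroup E] [InnerProductSpace ℝ E]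

-- `‖u + v‖ ^ 2` is a convex combination of `(‖u‖ + ‖v‖) ^ 2` and `(‖u‖ - ‖v‖) ^ 2`.
lemma cosh_norm_add_le (u v : E) :
    cosh ‖u + v‖ ≤
      cosh ‖u‖ * cosh ‖v‖ + ⟪u, v⟫ * (sinh ‖u‖ / ‖u‖ * (sinh ‖v‖ / ‖v‖)) := by
  rcases eq_or_ne u 0 with rfl | hu
  · simp
  rcases eq_or_ne v 0 with rfl | hv
  · simp
  have hu' : ‖u‖ ≠ 0 := norm_ne_zero_iff.2 hu
  have hv' : ‖v‖ ≠ 0 := norm_ne_zero_iff.2 hv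
  obtain ⟨τ, hτ⟩ : ∃ τ, τ = ⟪u, v⟫ / (‖u‖ * ‖v‖) := ⟨_, rfl⟩
  have hinner : ⟪u, v⟫ = τ * (‖u‖ * ‖v‖) := by rw [hτ, div_mul_cancel₀ _ (by positivity)]
  obtain ⟨hτ_ge, hτ_le⟩ : -1 ≤ τ ∧ τ ≤ 1 :=
    abs_le.1 (hτ ▸ abs_real_inner_div_norm_mul_norm_le_one u v)
  have hconvex := convexOn_cosh_sqrt.2 (Set.mem_Ici.2 (sq_nonneg (‖u‖ + ‖v‖)))
    (Set.mem_Ici.2 (sq_nonneg (‖u‖ - ‖v‖))) (show 0 ≤ (1 + τ) / 2 by linarith)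
    (show 0 ≤ (1 - τ) / 2 by linarith) (by ring)
  have hnorm : (1 + τ) / 2 * (‖u‖ + ‖v‖) ^ 2 + (1 - τ) / 2 * (‖u‖ - ‖v‖) ^ 2 = ‖u + v‖ ^ 2 := by
    rw [norm_add_sq_real, hinner]
    ring
  simp only [smul_eq_mul, hnorm, sqrt_sq_eq_abs, cosh_abs, abs_norm, cosh_add, cosh_sub] at hconvex
  calc cosh ‖u + v‖ ≤ cosh ‖u‖ * cosh ‖v‖ + τ * (sinh ‖u‖ * sinh ‖v‖) := by linarith
    _ = _ := by
      rw [hinner]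
      field_simp

lemma cosh_norm_add_le_expRemainder (u v : E) :
    cosh ‖u + v‖ ≤ cosh ‖u‖ * (1 + expRemainder ‖v‖) + sinh ‖u‖ / ‖u‖ * ⟪u, v⟫ := by
  rcases eq_or_ne v 0 with rfl | hv
  · simp [expRemainder]
  have hv' : 0 < ‖v‖ := norm_pos_iff.2 hv
  have hsinh_v : 0 ≤ sinh ‖v‖ - ‖v‖ := sub_nonneg.2 (self_le_sinh_iff.2 hv'.le)
  have hexcess : ⟪u, v⟫ * (sinh ‖u‖ / ‖u‖ * ((sinh ‖v‖ - ‖v‖) / ‖v‖)) ≤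
      cosh ‖u‖ * (sinh ‖v‖ - ‖v‖) := by
    calc _ ≤ ‖u‖ * ‖v‖ * (sinh ‖u‖ / ‖u‖ * ((sinh ‖v‖ - ‖v‖) / ‖v‖)) := by
          gcongr
          exact real_inner_le_norm u v
      _ = (‖u‖ / ‖u‖) * sinh ‖u‖ * (sinh ‖v‖ - ‖v‖) := by field_simp
      _ ≤ 1 * cosh ‖u‖ * (sinh ‖v‖ - ‖v‖) := by
          gcongr
          · exact div_self_le_one _
          · exact (sinh_lt_cosh _).le
      _ = cosh ‖u‖ * (sinh ‖v‖ - ‖v‖) := by rw [one_mul]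
  calc cosh ‖u + v‖
      ≤ cosh ‖u‖ * cosh ‖v‖ + ⟪u, v⟫ * (sinh ‖u‖ / ‖u‖ * (sinh ‖v‖ / ‖v‖)) :=
        cosh_norm_add_le u v
    _ = cosh ‖u‖ * cosh ‖v‖ + ⟪u, v⟫ * (sinh ‖u‖ / ‖u‖ * ((sinh ‖v‖ - ‖v‖) / ‖v‖)) +
          sinh ‖u‖ / ‖u‖ * ⟪u, v⟫ := by
        rw [sub_div, div_self hv'.ne']
        ring
    _ ≤ cosh ‖u‖ * cosh ‖v‖ + cosh ‖u‖ * (sinh ‖v‖ - ‖v‖) + sinh ‖u‖ / ‖u‖ * ⟪u, v⟫ := by gcongr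
    _ = cosh ‖u‖ * (1 + expRemainder ‖v‖) + sinh ‖u‖ / ‖u‖ * ⟪u, v⟫ := by
        rw [expRemainder, ← cosh_add_sinh]
        ring

lemma cosh_norm_add_smul_le (u : E) {g : E} (hg : ‖g‖ ≤ 1) (x : ℝ) :
    cosh ‖u + x • g‖ ≤
      cosh ‖u‖ * (1 + ‖g‖ ^ 2 * expRemainder |x|) + sinh ‖u‖ / ‖u‖ * ⟪u, g⟫ * x := by
  have hscale : expRemainder ‖x • g‖ ≤ ‖g‖ ^ 2 * expRemainder |x| := by
    rw [norm_smul, norm_eq_abs, mul_comm]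
    exact expRemainder_mul_le (norm_nonneg g) hg (abs_nonneg x)
  calc cosh ‖u + x • g‖
      ≤ cosh ‖u‖ * (1 + expRemainder ‖x • g‖) + sinh ‖u‖ / ‖u‖ * ⟪u, x • g⟫ :=
        cosh_norm_add_le_expRemainder u (x • g)
    _ ≤ cosh ‖u‖ * (1 + ‖g‖ ^ 2 * expRemainder |x|) + sinh ‖u‖ / ‖u‖ * ⟪u, x • g⟫ := by
        gcongr
    _ = _ := by
        rw [real_inner_smul_right]
        ring

-- Since `cosh ≥ 0`, the upper bounds at `x` and `-x` control the odd linear term.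
lemma abs_sinh_div_mul_inner_mul_le (u : E) {g : E} (hg : ‖g‖ ≤ 1) (x : ℝ) :
    |sinh ‖u‖ / ‖u‖ * ⟪u, g⟫ * x| ≤ cosh ‖u‖ * (1 + ‖g‖ ^ 2 * expRemainder |x|) := by
  have hpos := (cosh_pos ‖u + x • g‖).le.trans (cosh_norm_add_smul_le u hg x)
  have hneg := (cosh_pos ‖u + (-x) • g‖).le.trans (cosh_norm_add_smul_le u hg (-x))
  rw [abs_neg] at hneg
  exact abs_le.2 ⟨by linarith, by linarith⟩

end CoshNorm

section CondExp

variable {Ω : Type*} {m m0 : MeasurableSpace Ω} {μ : Measure Ω}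

lemma lintegral_mul_condLExp (hm : m ≤ m0) [SigmaFinite (μ.trim hm)] {Z Y : Ω → ENNReal}
    (hZ : Measurable[m] Z) (hY : AEMeasurable Y μ) :
    ∫⁻ ω, Z ω * μ⁻[Y | m] ω ∂μ = ∫⁻ ω, Z ω * Y ω ∂μ := by
  have htrim : (μ.withDensity (μ⁻[Y | m])).trim hm = (μ.withDensity Y).trim hm := by
    refine @Measure.ext _ m _ _ fun s hs => ?_
    rw [trim_measurableSet_eq hm hs, trim_measurableSet_eq hm hs, withDensity_apply _ (hm s hs),
      withDensity_apply _ (hm s hs), setLIntegral_condLExp hm μ Y hs]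
  have hlintegral {D : Ω → ENNReal} (hD : AEMeasurable D μ) :
      ∫⁻ ω, Z ω * D ω ∂μ = @lintegral Ω m ((μ.withDensity D).trim hm) Z := by
    rw [lintegral_trim hm hZ,
      lintegral_withDensity_eq_lintegral_mul₀ hD (hZ.mono hm le_rfl).aemeasurable]
    simp only [Pi.mul_apply, mul_comm]
  rw [hlintegral (measurable_condLExp' m μ Y).aemeasurable, hlintegral hY, htrim]

lemma integrable_mul_of_integrable_mul_condExp (hm : m ≤ m0) [SigmaFinite (μ.trim hm)]
    {q φ : Ω → ℝ} (hq : StronglyMeasurable[m] q) (hφ : Integrable φ μ) (hφ₀ : 0 ≤ᵐ[μ] φ)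
    (hqφ : Integrable (q * μ[φ | m]) μ) : Integrable (q * φ) μ := by
  refine ⟨(hq.mono hm).aestronglyMeasurable.mul hφ.1, ?_⟩
  calc ∫⁻ ω, ‖(q * φ) ω‖ₑ ∂μ = ∫⁻ ω, ‖q ω‖ₑ * ENNReal.ofReal (φ ω) ∂μ := by
        refine lintegral_congr_ae ?_
        filter_upwards [hφ₀] with ω hω
        rw [Pi.mul_apply, enorm_mul, enorm_of_nonneg hω]
    _ = ∫⁻ ω, ‖q ω‖ₑ * μ⁻[fun ω => ENNReal.ofReal (φ ω) | m] ω ∂μ :=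
        (lintegral_mul_condLExp hm hq.enorm hφ.aemeasurable.ennreal_ofReal).symm
    _ = ∫⁻ ω, ‖(q * μ[φ | m]) ω‖ₑ ∂μ := by
        refine lintegral_congr_ae ?_
        filter_upwards [condLExp_ofReal m hφ hφ₀, condExp_nonneg hφ₀] with ω hω hω₀
        rw [hω, Pi.mul_apply, enorm_mul, enorm_of_nonneg hω₀]
    _ < ⊤ := hqφ.2

lemma condExp_add_mul_add_mul_of_condExp_eq_zero (hm : m ≤ m0) [SigmaFinite (μ.trim hm)]
    {p q r φ ε : Ω → ℝ} (hp : StronglyMeasurable[m] p) (hq : StronglyMeasurable[m] q)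
    (hr : StronglyMeasurable[m] r) (hφ : Integrable φ μ) (hε : Integrable ε μ)
    (hε₀ : μ[ε | m] =ᵐ[μ] 0) (hpint : Integrable p μ) (hqφ : Integrable (q * φ) μ)
    (hrε : Integrable (r * ε) μ) :
    μ[p + q * φ + r * ε | m] =ᵐ[μ] p + q * μ[φ | m] := by
  filter_upwards [condExp_add (hpint.add hqφ) hrε m, condExp_add hpint hqφ m,
    condExp_mul_of_stronglyMeasurable_left hq hqφ hφ,
    condExp_mul_of_stronglyMeasurable_left hr hrε hε, hε₀] with ω hadd hadd' hmulq hmulr hω₀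
  rw [hadd, Pi.add_apply, hadd', Pi.add_apply, hmulq, hmulr, Pi.mul_apply r, hω₀,
    condExp_of_stronglyMeasurable hm hp hpint]
  simp

lemma integrable_and_condExp_le_of_le_add_mul_add_mul (hm : m ≤ m0) [SigmaFinite (μ.trim hm)]
    {p q r φ ε Y : Ω → ℝ} (hp : StronglyMeasurable[m] p) (hq : StronglyMeasurable[m] q)
    (hr : StronglyMeasurable[m] r) (hp₀ : 0 ≤ p) (hq₀ : 0 ≤ q)
    (hφ : Integrable φ μ) (hφ₀ : 0 ≤ φ) (hε : Integrable ε μ) (hε₀ : μ[ε | m] =ᵐ[μ] 0)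
    (hrε_le : |r * ε| ≤ p + q * φ) (hint : Integrable (p + q * μ[φ | m]) μ)
    (hY : AEStronglyMeasurable Y μ) (hY₀ : 0 ≤ Y) (hY_le : Y ≤ p + q * φ + r * ε) :
    Integrable Y μ ∧ μ[Y | m] ≤ᵐ[μ] p + q * μ[φ | m] := by
  have hpint : Integrable p μ := by
    refine hint.mono' (hp.mono hm).aestronglyMeasurable ?_
    filter_upwards [condExp_nonneg (m := m) (ae_of_all μ hφ₀)] with ω hω
    rw [norm_of_nonneg (hp₀ ω)]
    exact le_add_of_nonneg_right (mul_nonneg (hq₀ ω) hω)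
  have hqφ : Integrable (q * φ) μ :=
    integrable_mul_of_integrable_mul_condExp hm hq hφ (ae_of_all μ hφ₀)
      (by simpa using hint.sub hpint)
  have hrε : Integrable (r * ε) μ :=
    (hpint.add hqφ).mono' ((hr.mono hm).aestronglyMeasurable.mul hε.1) (ae_of_all μ hrε_le)
  have hbound := (hpint.add hqφ).add hrε
  have hYint : Integrable Y μ := by
    refine hbound.mono' hY (ae_of_all μ fun ω => ?_)
    rw [norm_of_nonneg (hY₀ ω)]
    exact hY_le ω
  exact ⟨hYint, (condExp_mono hYint hbound (ae_of_all μ hY_le)).trans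
    (condExp_add_mul_add_mul_of_condExp_eq_zero hm hp hq hr hφ hε hε₀ hpint hqφ hrε).le⟩

variable {E : Type*} [NormedAddCommGroup E] [InnerProductSpace ℝ E]

lemma integrable_mul_cosh_norm_and_condExp_le (hm : m ≤ m0) [SigmaFinite (μ.trim hm)]
    {w ε : Ω → ℝ} {u g : Ω → E} (hw : StronglyMeasurable[m] w) (hw₀ : 0 ≤ w)
    (hu : StronglyMeasurable[m] fun ω => ‖u ω‖) (hg : StronglyMeasurable[m] fun ω => ‖g ω‖)
    (hug : StronglyMeasurable[m] fun ω => ⟪u ω, g ω⟫) (hg₁ : ∀ ω, ‖g ω‖ ≤ 1)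
    (hε : Integrable ε μ) (hε₀ : μ[ε | m] =ᵐ[μ] 0)
    (hψ : Integrable (fun ω => expRemainder |ε ω|) μ)
    (hnorm : AEStronglyMeasurable (fun ω => ‖u ω + ε ω • g ω‖) μ)
    (hint : Integrable (fun ω => w ω * cosh ‖u ω‖ *
      (1 + ‖g ω‖ ^ 2 * (μ[fun ω => expRemainder |ε ω| | m]) ω)) μ) :
    Integrable (fun ω => w ω * cosh ‖u ω + ε ω • g ω‖) μ ∧
      μ[fun ω => w ω * cosh ‖u ω + ε ω • g ω‖ | m] ≤ᵐ[μ] fun ω => w ω * cosh ‖u ω‖ *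
        (1 + ‖g ω‖ ^ 2 * (μ[fun ω => expRemainder |ε ω| | m]) ω) := by
  set ψ : Ω → ℝ := fun ω => expRemainder |ε ω|
  set p : Ω → ℝ := fun ω => w ω * cosh ‖u ω‖
  set q : Ω → ℝ := fun ω => p ω * ‖g ω‖ ^ 2
  set r : Ω → ℝ := fun ω => w ω * (sinh ‖u ω‖ / ‖u ω‖ * ⟪u ω, g ω⟫)
  have hp : StronglyMeasurable[m] p := hw.mul (continuous_cosh.comp_stronglyMeasurable hu)
  have hr : StronglyMeasurable[m] r :=
    hw.mul (((continuous_sinh.comp_stronglyMeasurable hu).div hu).mul hug)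
  have hp₀ : 0 ≤ p := fun ω => mul_nonneg (hw₀ ω) (cosh_pos _).le
  have hpq (φ : Ω → ℝ) : (fun ω => p ω * (1 + ‖g ω‖ ^ 2 * φ ω)) = p + q * φ := by
    ext ω
    simp only [Pi.add_apply, Pi.mul_apply, q]
    ring
  have hrε_le : |r * ε| ≤ p + q * ψ := fun ω => by
    calc |r ω * ε ω| = w ω * |sinh ‖u ω‖ / ‖u ω‖ * ⟪u ω, g ω⟫ * ε ω| := by
          rw [mul_assoc, abs_mul, abs_of_nonneg (hw₀ ω)]
      _ ≤ w ω * (cosh ‖u ω‖ * (1 + ‖g ω‖ ^ 2 * ψ ω)) :=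
          mul_le_mul_of_nonneg_left (abs_sinh_div_mul_inner_mul_le _ (hg₁ ω) _) (hw₀ ω)
      _ = (p + q * ψ) ω := (mul_assoc ..).symm.trans (congrFun (hpq ψ) ω)
  have hY_le : (fun ω => w ω * cosh ‖u ω + ε ω • g ω‖) ≤ p + q * ψ + r * ε := fun ω => by
    calc _ ≤ w ω * _ := mul_le_mul_of_nonneg_left (cosh_norm_add_smul_le _ (hg₁ ω) _) (hw₀ ω)
      _ = p ω * (1 + ‖g ω‖ ^ 2 * ψ ω) + r ω * ε ω := by ring
      _ = _ := by rw [← hpq, Pi.add_apply, Pi.mul_apply]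
  rw [hpq] at hint ⊢
  exact integrable_and_condExp_le_of_le_add_mul_add_mul hm hp (hp.mul (hg.pow 2)) hr hp₀
    (fun ω => mul_nonneg (hp₀ ω) (sq_nonneg _)) hψ (fun ω => expRemainder_nonneg _) hε hε₀ hrε_le
    hint ((hw.mono hm).aestronglyMeasurable.mul (continuous_cosh.comp_aestronglyMeasurable hnorm))
    (fun ω => mul_nonneg (hw₀ ω) (cosh_pos _).le) hY_le

end CondExp

section Ville

variable {Ω : Type*} {m0 : MeasurableSpace Ω} {μ : Measure Ω} [IsFiniteMeasure μ]
  {ℱ : Filtration ℕ m0} {f : ℕ → Ω → ℝ}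

lemma maximal_ineq_of_supermartingale (hf : Supermartingale f ℱ μ) (hf₀ : 0 ≤ f) (c : ℝ) (N : ℕ) :
    c * μ.real {ω | ∃ n ≤ N, c ≤ f n ω} ≤ ∫ ω, f 0 ω ∂μ := by
  set τ : Ω → ℕ∞ := fun ω => (hittingBtwn f (Set.Ici c) 0 N ω : ℕ)
  have hτ : IsStoppingTime ℱ τ :=
    hf.stronglyAdapted.adapted.isStoppingTime_hittingBtwn measurableSet_Ici
  have hτN ω : τ ω ≤ N := Nat.cast_le.2 (hittingBtwn_le ω)
  have hint : Integrable (stoppedValue f τ) μ := by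
    exact integrable_neg_iff.1 (hf.neg.integrable_stoppedValue hτ hτN)
  have hstopped : ∫ ω, stoppedValue f τ ω ∂μ ≤ ∫ ω, f 0 ω ∂μ := by
    have := hf.neg.expected_stoppedValue_mono (isStoppingTime_const ℱ 0) hτ
      (fun _ => zero_le) hτN
    simpa [stoppedValue, integral_neg] using this
  calc c * μ.real {ω | ∃ n ≤ N, c ≤ f n ω}
      = c * μ.real {ω | c ≤ stoppedValue f τ ω} := by
        congr 2 with ω
        refine ⟨fun ⟨n, hn, hle⟩ => ?_, fun hle => ⟨_, hittingBtwn_le ω, hle⟩⟩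
        exact stoppedValue_hittingBtwn_mem ⟨n, ⟨Nat.zero_le n, hn⟩, hle⟩
    _ ≤ ∫ ω, stoppedValue f τ ω ∂μ :=
        mul_meas_ge_le_integral_of_nonneg (ae_of_all μ fun ω => hf₀ _ ω) hint c
    _ ≤ ∫ ω, f 0 ω ∂μ := hstopped

lemma ville_ineq (hf : Supermartingale f ℱ μ) (hf₀ : 0 ≤ f) (c : ℝ) :
    c * μ.real {ω | ∃ n, c ≤ f n ω} ≤ ∫ ω, f 0 ω ∂μ := by
  have hmono : Monotone fun N => {ω | ∃ n ≤ N, c ≤ f n ω} :=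
    fun _ _ hNN' _ ⟨n, hn, hle⟩ => ⟨n, hn.trans hNN', hle⟩
  have hunion : {ω | ∃ n, c ≤ f n ω} = ⋃ N, {ω | ∃ n ≤ N, c ≤ f n ω} := by
    ext ω
    simp only [Set.mem_ofPred_eq, Set.mem_iUnion]
    exact ⟨fun ⟨n, hle⟩ => ⟨n, n, le_rfl, hle⟩, fun ⟨_, n, _, hle⟩ => ⟨n, hle⟩⟩
  have hlim : Tendsto (fun N => μ.real {ω | ∃ n ≤ N, c ≤ f n ω}) atTop
      (nhds (μ.real {ω | ∃ n, c ≤ f n ω})) := by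
    rw [hunion]
    exact (ENNReal.tendsto_toReal (measure_ne_top μ _)).comp (tendsto_measure_iUnion_atTop hmono)
  exact le_of_tendsto (hlim.const_mul c)
    (Eventually.of_forall fun N => maximal_ineq_of_supermartingale hf hf₀ c N)

end Ville

section RankOneUpdate

lemma eq_sub_smulRight_of_add_smulRight_mul_eq_one {𝕜 V : Type*} [NormedField 𝕜]
    [NormedAddCommGroup V] [NormedSpace 𝕜 V] {A T T' : V →L[𝕜] V} {f : V →L[𝕜] 𝕜} {x : V}
    (hT : T * A = 1) (hT' : (A + f.smulRight x) * T' = 1) :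
    T' = T - (1 + f (T x))⁻¹ • (f ∘L T).smulRight (T x) := by
  have hresolvent y : T y = T' y + f (T' y) • T x := by
    have hy : A (T' y) + f (T' y) • x = y := DFunLike.congr_fun hT' y
    have hTA : T (A (T' y)) = T' y := DFunLike.congr_fun hT (T' y)
    conv_lhs => rw [← hy, map_add, map_smul, hTA]
  have hscalar y : f (T y) = (1 + f (T x)) * f (T' y) := by
    rw [hresolvent y, map_add, map_smul, smul_eq_mul]
    ring
  have hne : 1 + f (T x) ≠ 0 := fun h => by
    have hfx : f (T x) = 0 := by rw [hscalar x, h, zero_mul]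
    simp [hfx] at h
  ext y
  calc T' y = T y - f (T' y) • T x := by rw [hresolvent y, add_sub_cancel_right]
    _ = T y - ((1 + f (T x))⁻¹ * f (T y)) • T x := by rw [hscalar y, inv_mul_cancel_left₀ hne]
    _ = (T - (1 + f (T x))⁻¹ • (f ∘L T).smulRight (T x)) y := by simp [mul_smul]

variable {H : Type*} [NormedAddCommGroup H] [InnerProductSpace ℝ H]

lemma isSymmetric_of_comp_eq_one {Q R : H →L[ℝ] H} (hQ : Q.IsSymmetric) (hQR : Q ∘L R = 1) :
    R.IsSymmetric := fun x y => by
  have hinv z : Q (R z) = z := DFunLike.congr_fun hQR z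
  calc ⟪R x, y⟫ = ⟪R x, Q (R y)⟫ := by rw [hinv]
    _ = ⟪Q (R x), R y⟫ := (hQ _ _).symm
    _ = ⟪x, R y⟫ := by rw [hinv]

lemma norm_sq_apply_of_comp_self_eq_add_outerProd {Q Q' : H →L[ℝ] H} {x : H}
    (hQ : Q.IsSymmetric) (hQ' : Q'.IsSymmetric) (hsq : Q' ∘L Q' = Q ∘L Q + outerProd x) (z : H) :
    ‖Q' z‖ ^ 2 = ‖Q z‖ ^ 2 + ⟪x, z⟫ ^ 2 := by
  have hz : Q' (Q' z) = Q (Q z) + ⟪x, z⟫ • x := DFunLike.congr_fun hsq z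
  calc ‖Q' z‖ ^ 2 = ⟪z, Q' (Q' z)⟫ := by rw [← real_inner_self_eq_norm_sq]; exact hQ' _ _
    _ = ⟪z, Q (Q z)⟫ + ⟪x, z⟫ ^ 2 := by
      rw [hz, inner_add_right, real_inner_smul_right, real_inner_comm x z, sq]
    _ = ‖Q z‖ ^ 2 + ⟪x, z⟫ ^ 2 := by
      rw [← real_inner_self_eq_norm_sq (Q z)]
      exact congrArg (· + _) (hQ _ _).symm

lemma norm_inverse_apply_le_of_add_outerProd {Q Q' R R' : H →L[ℝ] H} {x : H}
    (hQ : Q.IsSymmetric) (hQ' : Q'.IsSymmetric) (hQR : Q ∘L R = 1) (hQR' : Q' ∘L R' = 1)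
    (hsq : Q' ∘L Q' = Q ∘L Q + outerProd x) (y : H) : ‖R' y‖ ≤ ‖R y‖ := by
  have hinv : Q (R y) = y := DFunLike.congr_fun hQR y
  have hinv' : Q' (R' (R' y)) = R' y := DFunLike.congr_fun hQR' (R' y)
  have hle : ‖Q (R' (R' y))‖ ≤ ‖R' y‖ := by
    rw [← sq_le_sq₀ (norm_nonneg _) (norm_nonneg _)]
    calc ‖Q (R' (R' y))‖ ^ 2 ≤ ‖Q' (R' (R' y))‖ ^ 2 := by
          rw [norm_sq_apply_of_comp_self_eq_add_outerProd hQ hQ' hsq]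
          exact le_add_of_nonneg_right (sq_nonneg _)
      _ = ‖R' y‖ ^ 2 := by rw [hinv']
  have hmul : ‖R' y‖ * ‖R' y‖ ≤ ‖R y‖ * ‖R' y‖ := by
    calc ‖R' y‖ * ‖R' y‖ = ⟪R' y, R' y⟫ := (real_inner_self_eq_norm_mul_norm _).symm
      _ = ⟪y, R' (R' y)⟫ := isSymmetric_of_comp_eq_one hQ' hQR' _ _
      _ = ⟪Q (R y), R' (R' y)⟫ := by rw [hinv]
      _ = ⟪R y, Q (R' (R' y))⟫ := hQ _ _
      _ ≤ ‖R y‖ * ‖Q (R' (R' y))‖ := real_inner_le_norm _ _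
      _ ≤ ‖R y‖ * ‖R' y‖ := by gcongr
  rcases (norm_nonneg (R' y)).eq_or_lt with hzero | hpos
  · exact hzero ▸ norm_nonneg _
  · exact le_of_mul_le_mul_right hmul hpos

lemma norm_inverse_apply_self_le_one_of_add_outerProd {Q Q' R' : H →L[ℝ] H} {x : H}
    (hQ : Q.IsSymmetric) (hQ' : Q'.IsSymmetric) (hQR' : Q' ∘L R' = 1)
    (hsq : Q' ∘L Q' = Q ∘L Q + outerProd x) : ‖R' x‖ ≤ 1 := by
  have hinv' : Q' (R' (R' x)) = R' x := DFunLike.congr_fun hQR' (R' x)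
  have hinner : ⟪x, R' (R' x)⟫ = ‖R' x‖ ^ 2 := by
    rw [← real_inner_self_eq_norm_sq]
    exact (isSymmetric_of_comp_eq_one hQ' hQR' _ _).symm
  have hsplit := norm_sq_apply_of_comp_self_eq_add_outerProd hQ hQ' hsq (R' (R' x))
  rw [hinv', hinner] at hsplit
  by_contra! hlt
  nlinarith [sq_nonneg ‖Q (R' (R' x))‖, one_lt_pow₀ hlt two_ne_zero]

end RankOneUpdate

section SelfNormalizer

variable {Ω : Type*} {m0 : MeasurableSpace Ω} {ℱ : Filtration ℕ m0}

/-- A predictable sequence of operators `R n` that normalises the increments of a process along `X`: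
the norms `‖R n y‖` decrease in `n`, and `R n` maps `X n` into the unit ball.

Predictability of `R` is only required through the norms `‖R n y‖`; with
`R n = (ρ + ∑ i ≤ n, X i (X i)ᵀ) ^ (-1 / 2)` this avoids the measurability of operator square
roots. -/
structure IsSelfNormalizer {H E : Type*} [NormedAddCommGroup H] [NormedSpace ℝ H]
    [NormedAddCommGroup E] [InnerProductSpace ℝ E] (ℱ : Filtration ℕ m0) (X : ℕ → Ω → H)
    (R : ℕ → Ω → H →L[ℝ] E) : Prop where
  stronglyMeasurable_norm : ∀ (n : ℕ) {m : MeasurableSpace Ω}, ℱ n ≤ m → ∀ {u : Ω → H},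
    StronglyMeasurable[m] u → StronglyMeasurable[m] fun ω => ‖R (n + 1) ω (u ω)‖
  norm_succ_le : ∀ n ω y, ‖R (n + 1) ω y‖ ≤ ‖R n ω y‖
  norm_apply_le_one : ∀ n ω, ‖R (n + 1) ω (X (n + 1) ω)‖ ≤ 1

lemma IsSelfNormalizer.stronglyMeasurable_inner {H E : Type*} [NormedAddCommGroup H]
    [NormedSpace ℝ H] [NormedAddCommGroup E] [InnerProductSpace ℝ E] {X : ℕ → Ω → H}
    {R : ℕ → Ω → H →L[ℝ] E} (hR : IsSelfNormalizer ℱ X R) (n : ℕ) {u v : Ω → H}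
    (hu : StronglyMeasurable[ℱ n] u) (hv : StronglyMeasurable[ℱ n] v) :
    StronglyMeasurable[ℱ n] fun ω => ⟪R (n + 1) ω (u ω), R (n + 1) ω (v ω)⟫ := by
  have hnorm {y : Ω → H} (hy : StronglyMeasurable[ℱ n] y) := hR.stronglyMeasurable_norm n le_rfl hy
  simp only [real_inner_eq_norm_mul_self_add_norm_mul_self_sub_norm_sub_mul_self_div_two,
    ← map_sub]
  exact ((((hnorm hu).mul (hnorm hu)).add ((hnorm hv).mul (hnorm hv))).sub
    ((hnorm (hu.sub hv)).mul (hnorm (hu.sub hv)))).div stronglyMeasurable_const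

variable {H : Type*} [NormedAddCommGroup H] [InnerProductSpace ℝ H] {X : ℕ → Ω → H}

-- By the Sherman-Morrison formula each inverse is, up to inverting a real number, a continuous
-- function of the previous inverse and the new vector, so `H` need not be separable.
lemma isStronglyPredictable_inverse_of_add_outerProd {A T : ℕ → Ω → H →L[ℝ] H}
    {A₀ : H →L[ℝ] H} (hX : ∀ n, StronglyMeasurable[ℱ n] (X (n + 1))) (hA₀ : ∀ ω, A 0 ω = A₀)
    (hA : ∀ n ω, A (n + 1) ω = A n ω + outerProd (X (n + 1) ω))
    (hTA : ∀ n ω, T n ω * A n ω = 1) (hAT : ∀ n ω, A n ω * T n ω = 1) :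
    IsStronglyPredictable ℱ T := by
  have hzero : StronglyMeasurable[ℱ 0] (T 0) := stronglyMeasurable_const' fun ω ω' =>
    left_inv_eq_right_inv (hTA 0 ω) (by rw [hA₀ ω, ← hA₀ ω', hAT])
  have hsucc n (hn : StronglyMeasurable[ℱ n] (T n)) : StronglyMeasurable[ℱ n] (T (n + 1)) := by
    have hupdate : T (n + 1) = fun ω => T n ω - (1 + ⟪X (n + 1) ω, T n ω (X (n + 1) ω)⟫)⁻¹ •
        (innerSL ℝ (X (n + 1) ω) ∘L T n ω).smulRight (T n ω (X (n + 1) ω)) := funext fun ω =>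
      eq_sub_smulRight_of_add_smulRight_mul_eq_one (hTA n ω) ((hA n ω) ▸ hAT (n + 1) ω)
    have happly : StronglyMeasurable[ℱ n] fun ω => T n ω (X (n + 1) ω) :=
      isBoundedBilinearMap_apply.continuous.comp_stronglyMeasurable (hn.prodMk (hX n))
    have hscalar : StronglyMeasurable[ℱ n]
        fun ω => (1 + ⟪X (n + 1) ω, T n ω (X (n + 1) ω)⟫)⁻¹ :=
      (((hX n).inner happly).measurable.const_add 1).inv.stronglyMeasurable
    have hcont : Continuous fun p : (H →L[ℝ] H) × H × H =>
        (innerSL ℝ p.2.1 ∘L p.1).smulRight p.2.2 := by fun_prop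
    rw [hupdate]
    exact hn.sub (hscalar.smul
      (hcont.comp_stronglyMeasurable (hn.prodMk ((hX n).prodMk happly))))
  have hadapted n : StronglyMeasurable[ℱ n] (T n) := by
    induction n with
    | zero => exact hzero
    | succ n ih => exact (hsucc n ih).mono (ℱ.mono n.le_succ)
  exact .of_measurable_add_one hzero fun n => hsucc n (hadapted n)

lemma isSelfNormalizer_inverse_of_comp_self_eq_add_outerProd {A : H →L[ℝ] H}
    {Q R : ℕ → Ω → H →L[ℝ] H} (hX : ∀ n, StronglyMeasurable[ℱ n] (X (n + 1)))
    (hQ : ∀ n ω, (Q n ω).IsSymmetric)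
    (hQsq : ∀ n ω, Q n ω ∘L Q n ω = A + ∑ i ∈ Finset.Icc 1 n, outerProd (X i ω))
    (hRQ : ∀ n ω, R n ω ∘L Q n ω = 1) (hQR : ∀ n ω, Q n ω ∘L R n ω = 1) :
    IsSelfNormalizer ℱ X R := by
  have hsucc n ω : Q (n + 1) ω ∘L Q (n + 1) ω = Q n ω ∘L Q n ω + outerProd (X (n + 1) ω) := by
    rw [hQsq, hQsq, Finset.sum_Icc_succ_top (Nat.le_add_left 1 n), add_assoc]
  have hgram : IsStronglyPredictable ℱ fun n ω => R n ω * R n ω := by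
    have hcancel {U V : H →L[ℝ] H} (h : U * V = 1) : U * U * (V * V) = 1 := by
      rw [mul_assoc, ← mul_assoc U V V, h, one_mul, h]
    exact isStronglyPredictable_inverse_of_add_outerProd (A := fun n ω => Q n ω * Q n ω) hX
      (fun ω => (hQsq 0 ω).trans (add_zero A)) hsucc (fun n ω => hcancel (hRQ n ω))
      fun n ω => hcancel (hQR n ω)
  refine ⟨fun n m hm u hu => ?_, fun n ω y => ?_, fun n ω => ?_⟩
  · have hnorm : (fun ω => ‖R (n + 1) ω (u ω)‖) =
        fun ω => √⟪u ω, (R (n + 1) ω * R (n + 1) ω) (u ω)⟫ := funext fun ω => by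
      rw [norm_eq_sqrt_real_inner]
      congr 1
      exact isSymmetric_of_comp_eq_one (hQ _ ω) (hQR _ ω) _ _
    rw [hnorm]
    exact continuous_sqrt.comp_stronglyMeasurable (hu.inner
      (isBoundedBilinearMap_apply.continuous.comp_stronglyMeasurable
        (((hgram.measurable_add_one n).mono hm).prodMk hu)))
  · exact norm_inverse_apply_le_of_add_outerProd (hQ n ω) (hQ _ ω) (hQR n ω) (hQR _ ω) (hsucc n ω) y
  · exact norm_inverse_apply_self_le_one_of_add_outerProd (hQ n ω) (hQ _ ω) (hQR _ ω) (hsucc n ω)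

end SelfNormalizer

section DiscountedCosh

variable {Ω : Type*} {m0 : MeasurableSpace Ω} {ℱ : Filtration ℕ m0} {μ : Measure Ω}
  {H E : Type*} [NormedAddCommGroup H] [NormedSpace ℝ H] [NormedAddCommGroup E]
  [InnerProductSpace ℝ E] {X : ℕ → Ω → H} {R : ℕ → Ω → H →L[ℝ] E} {ε : ℕ → Ω → ℝ}

/-- The martingale transform `M n = ∑ i ≤ n, ε i • X i`; the indices start at `1`. -/
def noiseSum (X : ℕ → Ω → H) (ε : ℕ → Ω → ℝ) (n : ℕ) (ω : Ω) : H :=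
  ∑ i ∈ Finset.Icc 1 n, ε i ω • X i ω

/-- The predictable compensator `∑ i ≤ n, ‖R i (X i)‖² E[ψ(|ε i|) | ℱ (i - 1)]`, where `ψ` is
`expRemainder`; the scale `λ` of the noise is absorbed in `ε`. -/
noncomputable def noiseCompensator (μ : Measure Ω) (ℱ : Filtration ℕ m0) (X : ℕ → Ω → H)
    (R : ℕ → Ω → H →L[ℝ] E) (ε : ℕ → Ω → ℝ) (n : ℕ) (ω : Ω) : ℝ :=
  ∑ i ∈ Finset.Icc 1 n,
    ‖R i ω (X i ω)‖ ^ 2 * (μ[fun ω' => expRemainder |ε i ω'| | ℱ (i - 1)]) ω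

/-- Pinelis' process: the hyperbolic cosine of the self-normalised norm `‖R n (M n)‖`, discounted
by the exponential of the compensator so as to become a supermartingale. -/
noncomputable def discountedCosh (μ : Measure Ω) (ℱ : Filtration ℕ m0) (X : ℕ → Ω → H)
    (R : ℕ → Ω → H →L[ℝ] E) (ε : ℕ → Ω → ℝ) (n : ℕ) (ω : Ω) : ℝ :=
  exp (-noiseCompensator μ ℱ X R ε n ω) * cosh ‖R n ω (noiseSum X ε n ω)‖

lemma noiseSum_succ (n : ℕ) (ω : Ω) :
    noiseSum X ε (n + 1) ω = noiseSum X ε n ω + ε (n + 1) ω • X (n + 1) ω :=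
  Finset.sum_Icc_succ_top (Nat.le_add_left 1 n) _

lemma noiseCompensator_succ (n : ℕ) (ω : Ω) :
    noiseCompensator μ ℱ X R ε (n + 1) ω = noiseCompensator μ ℱ X R ε n ω +
      ‖R (n + 1) ω (X (n + 1) ω)‖ ^ 2 *
        (μ[fun ω' => expRemainder |ε (n + 1) ω'| | ℱ n]) ω :=
  Finset.sum_Icc_succ_top (Nat.le_add_left 1 n) _

lemma discountedCosh_zero : discountedCosh μ ℱ X R ε 0 = 1 := by
  ext ω
  simp [discountedCosh, noiseCompensator, noiseSum]

lemma discountedCosh_pos (n : ℕ) (ω : Ω) : 0 < discountedCosh μ ℱ X R ε n ω :=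
  mul_pos (exp_pos _) (cosh_pos _)

lemma discountedCosh_succ (n : ℕ) (ω : Ω) :
    discountedCosh μ ℱ X R ε (n + 1) ω = exp (-noiseCompensator μ ℱ X R ε (n + 1) ω) *
      cosh ‖R (n + 1) ω (noiseSum X ε n ω) + ε (n + 1) ω • R (n + 1) ω (X (n + 1) ω)‖ := by
  rw [discountedCosh, noiseSum_succ, map_add, map_smul]

lemma stronglyAdapted_noiseSum (hX : ∀ n, StronglyMeasurable[ℱ n] (X (n + 1)))
    (hε : ∀ n, StronglyMeasurable[ℱ (n + 1)] (ε (n + 1))) :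
    StronglyAdapted ℱ (noiseSum X ε) := fun n => by
  induction n with
  | zero => exact stronglyMeasurable_const (b := (0 : H))
  | succ n ih =>
    rw [funext (noiseSum_succ n)]
    exact (ih.mono (ℱ.mono n.le_succ)).add ((hε n).smul ((hX n).mono (ℱ.mono n.le_succ)))

lemma stronglyMeasurable_noiseCompensator_succ (hR : IsSelfNormalizer ℱ X R)
    (hX : ∀ n, StronglyMeasurable[ℱ n] (X (n + 1))) (n : ℕ) :
    StronglyMeasurable[ℱ n] (noiseCompensator μ ℱ X R ε (n + 1)) := by
  refine Finset.stronglyMeasurable_fun_sum _ fun i hi => ?_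
  obtain ⟨i, rfl⟩ := Nat.exists_eq_add_of_le' (Finset.mem_Icc.1 hi).1
  have hin : i ≤ n := Nat.le_of_succ_le_succ (Finset.mem_Icc.1 hi).2
  exact (((hR.stronglyMeasurable_norm i le_rfl (hX i)).pow 2).mul
    stronglyMeasurable_condExp).mono (ℱ.mono hin)

lemma stronglyAdapted_discountedCosh (hR : IsSelfNormalizer ℱ X R)
    (hX : ∀ n, StronglyMeasurable[ℱ n] (X (n + 1)))
    (hε : ∀ n, StronglyMeasurable[ℱ (n + 1)] (ε (n + 1))) :
    StronglyAdapted ℱ (discountedCosh μ ℱ X R ε)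
  | 0 => discountedCosh_zero (R := R) ▸ stronglyMeasurable_one
  | n + 1 => by
    have hcomp := (stronglyMeasurable_noiseCompensator_succ (μ := μ) (ε := ε) hR hX n).mono
      (ℱ.mono n.le_succ)
    exact (continuous_exp.comp_stronglyMeasurable hcomp.neg).mul
      (continuous_cosh.comp_stronglyMeasurable
        (hR.stronglyMeasurable_norm n (ℱ.mono n.le_succ) (stronglyAdapted_noiseSum hX hε _)))

lemma exp_mul_cosh_mul_le_discountedCosh (hR : IsSelfNormalizer ℱ X R) (n : ℕ) (ω : Ω) :
    exp (-noiseCompensator μ ℱ X R ε (n + 1) ω) * cosh ‖R (n + 1) ω (noiseSum X ε n ω)‖ *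
        (1 + ‖R (n + 1) ω (X (n + 1) ω)‖ ^ 2 *
          (μ[fun ω' => expRemainder |ε (n + 1) ω'| | ℱ n]) ω) ≤
      discountedCosh μ ℱ X R ε n ω := by
  rw [noiseCompensator_succ]
  set e := ‖R (n + 1) ω (X (n + 1) ω)‖ ^ 2 *
    (μ[fun ω' => expRemainder |ε (n + 1) ω'| | ℱ n]) ω
  calc exp (-(noiseCompensator μ ℱ X R ε n ω + e)) *
        cosh ‖R (n + 1) ω (noiseSum X ε n ω)‖ * (1 + e)
      ≤ exp (-(noiseCompensator μ ℱ X R ε n ω + e)) *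
          cosh ‖R (n + 1) ω (noiseSum X ε n ω)‖ * exp e := by
        gcongr
        rw [add_comm]
        exact add_one_le_exp e
    _ ≤ exp (-(noiseCompensator μ ℱ X R ε n ω + e)) *
          cosh ‖R n ω (noiseSum X ε n ω)‖ * exp e := by
        gcongr
        rw [cosh_le_cosh, abs_norm, abs_norm]
        exact hR.norm_succ_le n ω _
    _ = discountedCosh μ ℱ X R ε n ω := by
        rw [mul_right_comm, ← exp_add, neg_add, neg_add_cancel_right, discountedCosh]

variable [IsFiniteMeasure μ]

lemma integrable_discountedCosh_succ_and_condExp_le (hR : IsSelfNormalizer ℱ X R)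
    (hX : ∀ n, StronglyMeasurable[ℱ n] (X (n + 1)))
    (hε : ∀ n, StronglyMeasurable[ℱ (n + 1)] (ε (n + 1))) {n : ℕ}
    (hεint : Integrable (ε (n + 1)) μ) (hε₀ : μ[ε (n + 1) | ℱ n] =ᵐ[μ] 0)
    (hψ : Integrable (fun ω => expRemainder |ε (n + 1) ω|) μ)
    (hS : Integrable (discountedCosh μ ℱ X R ε n) μ) :
    Integrable (discountedCosh μ ℱ X R ε (n + 1)) μ ∧
      μ[discountedCosh μ ℱ X R ε (n + 1) | ℱ n] ≤ᵐ[μ] discountedCosh μ ℱ X R ε n := by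
  have hM := stronglyAdapted_noiseSum hX hε
  have hw : StronglyMeasurable[ℱ n] fun ω => exp (-noiseCompensator μ ℱ X R ε (n + 1) ω) :=
    continuous_exp.comp_stronglyMeasurable (stronglyMeasurable_noiseCompensator_succ hR hX n).neg
  have hu := hR.stronglyMeasurable_norm n le_rfl (hM n)
  have hg := hR.stronglyMeasurable_norm n le_rfl (hX n)
  have hnorm : StronglyMeasurable[ℱ (n + 1)] fun ω =>
      ‖R (n + 1) ω (noiseSum X ε n ω) + ε (n + 1) ω • R (n + 1) ω (X (n + 1) ω)‖ := by
    simp only [← map_smul, ← map_add, ← noiseSum_succ]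
    exact hR.stronglyMeasurable_norm n (ℱ.mono n.le_succ) (hM (n + 1))
  have hbound := exp_mul_cosh_mul_le_discountedCosh (μ := μ) (ε := ε) hR n
  rw [funext (discountedCosh_succ n)]
  refine (integrable_mul_cosh_norm_and_condExp_le (ℱ.le n) hw (fun ω => (exp_pos _).le) hu hg
    (hR.stronglyMeasurable_inner n (hM n) (hX n)) (hR.norm_apply_le_one n) hεint hε₀ hψ
    (hnorm.mono (ℱ.le _)).aestronglyMeasurable ?_).imp_right
    fun hle => hle.trans (ae_of_all μ hbound)
  refine hS.mono' ((((hw.mul (continuous_cosh.comp_stronglyMeasurable hu)).mul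
    (stronglyMeasurable_const.add ((hg.pow 2).mul stronglyMeasurable_condExp))).mono
      (ℱ.le n)).aestronglyMeasurable) ?_
  filter_upwards [condExp_nonneg (m := ℱ n)
    (ae_of_all μ fun ω => expRemainder_nonneg |ε (n + 1) ω|)] with ω hω
  rw [norm_of_nonneg]
  · exact hbound ω
  · exact mul_nonneg (mul_nonneg (exp_pos _).le (cosh_pos _).le)
      (add_nonneg zero_le_one (mul_nonneg (sq_nonneg _) hω))

lemma supermartingale_discountedCosh (hR : IsSelfNormalizer ℱ X R)
    (hX : ∀ n, StronglyMeasurable[ℱ n] (X (n + 1)))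
    (hε : ∀ n, StronglyMeasurable[ℱ (n + 1)] (ε (n + 1)))
    (hεint : ∀ n, Integrable (ε (n + 1)) μ) (hε₀ : ∀ n, μ[ε (n + 1) | ℱ n] =ᵐ[μ] 0)
    (hψ : ∀ n, Integrable (fun ω => expRemainder |ε (n + 1) ω|) μ) :
    Supermartingale (discountedCosh μ ℱ X R ε) ℱ μ := by
  have hstep n := integrable_discountedCosh_succ_and_condExp_le hR hX hε (hεint n) (hε₀ n) (hψ n)
  have hint n : Integrable (discountedCosh μ ℱ X R ε n) μ := by
    induction n with
    | zero => exact discountedCosh_zero (R := R) ▸ integrable_const 1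
    | succ n ih => exact (hstep n ih).1
  exact supermartingale_nat (stronglyAdapted_discountedCosh hR hX hε) hint
    fun n => (hstep n (hint n)).2

end DiscountedCosh

section TailBound

lemma le_add_log_of_exp_neg_mul_cosh_le {a y c : ℝ} (h : exp (-a) * cosh y ≤ c) :
    y ≤ a + log (2 * c) := by
  have hexp : exp (y - a) ≤ 2 * c := by
    calc exp (y - a) = exp (-a) * exp y := by rw [← exp_add, neg_add_eq_sub]
      _ ≤ exp (-a) * (2 * cosh y) := by
        gcongr
        linarith [cosh_eq y, exp_pos (-y)]
      _ ≤ 2 * c := by linarith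
  linarith [(le_log_iff_exp_le ((exp_pos _).trans_le hexp)).2 hexp]

variable {Ω : Type*} {m0 : MeasurableSpace Ω} {ℱ : Filtration ℕ m0} {μ : Measure Ω}
  [IsProbabilityMeasure μ]

lemma ofReal_one_sub_le_measure_forall_norm_le {H E : Type*} [NormedAddCommGroup H]
    [NormedSpace ℝ H] [NormedAddCommGroup E] [InnerProductSpace ℝ E] {X : ℕ → Ω → H}
    {R : ℕ → Ω → H →L[ℝ] E} {ε : ℕ → Ω → ℝ} (hR : IsSelfNormalizer ℱ X R)
    (hX : ∀ n, StronglyMeasurable[ℱ n] (X (n + 1)))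
    (hε : ∀ n, StronglyMeasurable[ℱ (n + 1)] (ε (n + 1)))
    (hεint : ∀ n, Integrable (ε (n + 1)) μ) (hε₀ : ∀ n, μ[ε (n + 1) | ℱ n] =ᵐ[μ] 0)
    (hψ : ∀ n, Integrable (fun ω => expRemainder |ε (n + 1) ω|) μ) {δ : ℝ} (hδ : 0 < δ) :
    ENNReal.ofReal (1 - δ) ≤ μ {ω | ∀ n,
      ‖R n ω (noiseSum X ε n ω)‖ ≤ noiseCompensator μ ℱ X R ε n ω + log (2 / δ)} := by
  set bad : Set Ω := {ω | ∃ n, δ⁻¹ ≤ discountedCosh μ ℱ X R ε n ω}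
  have hbad : μ.real bad ≤ δ := by
    have hville := ville_ineq (supermartingale_discountedCosh hR hX hε hεint hε₀ hψ)
      (fun n ω => (discountedCosh_pos n ω).le) δ⁻¹
    simpa [discountedCosh_zero, inv_mul_le_iff₀ hδ] using hville
  have hgood : badᶜ ⊆ {ω | ∀ n,
      ‖R n ω (noiseSum X ε n ω)‖ ≤ noiseCompensator μ ℱ X R ε n ω + log (2 / δ)} :=
    fun ω hω n => le_add_log_of_exp_neg_mul_cosh_le
      (not_le.1 fun hle => hω ⟨n, hle⟩).le
  rw [ENNReal.ofReal_le_iff_le_toReal (measure_ne_top μ _)]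
  have hcover : 1 ≤ μ.real bad + μ.real badᶜ := by
    rw [← probReal_univ (μ := μ), ← Set.union_compl_self bad]
    exact measureReal_union_le bad badᶜ
  have hmono := measureReal_mono (μ := μ) hgood
  change 1 - δ ≤ μ.real _
  linarith

theorem stmt_1_general {H : Type*} [NormedAddCommGroup H] [InnerProductSpace ℝ H]
    (X : ℕ → Ω → H) (ε : ℕ → Ω → ℝ)
    (hX : ∀ t, 1 ≤ t → StronglyMeasurable[ℱ (t - 1)] (X t))
    (hεmeas : ∀ t, 1 ≤ t → StronglyMeasurable[ℱ t] (ε t))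
    (hεint : ∀ t, 1 ≤ t → Integrable (ε t) μ)
    (hε0 : ∀ t, 1 ≤ t → μ[ε t | ℱ (t - 1)] =ᵐ[μ] 0)
    (A : H →L[ℝ] H) (Q Qinv : ℕ → Ω → H →L[ℝ] H)
    (hQsymm : ∀ t ω, (Q t ω).IsSymmetric)
    (hQsq : ∀ t ω, Q t ω ∘L Q t ω = A + ∑ i ∈ Finset.Icc 1 t, outerProd (X i ω))
    (hQinv : ∀ t ω, Qinv t ω ∘L Q t ω = 1 ∧ Q t ω ∘L Qinv t ω = 1)
    (l : ℝ) (hl : 0 < l)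
    (hmgf : ∀ t, 1 ≤ t → Integrable (fun ω => exp (l * |ε t ω|)) μ)
    (e : ℕ → Ω → ℝ)
    (he : ∀ t ω, e t ω = ‖Qinv t ω (X t ω)‖ ^ 2 *
      (μ[fun ω' => exp (l * |ε t ω'|) - l * |ε t ω'| - 1 | ℱ (t - 1)]) ω)
    (δ : ℝ) (hδ : 0 < δ) :
    ENNReal.ofReal (1 - δ) ≤
      μ {ω | ∀ t, ‖Qinv t ω (∑ i ∈ Finset.Icc 1 t, ε i ω • X i ω)‖ ≤
        ((∑ i ∈ Finset.Icc 1 t, e i ω) + log (2 / δ)) / l} := by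
  have hX' n : StronglyMeasurable[ℱ n] (X (n + 1)) := hX (n + 1) n.succ_pos
  have hR : IsSelfNormalizer ℱ X Qinv :=
    isSelfNormalizer_inverse_of_comp_self_eq_add_outerProd hX' hQsymm hQsq
      (fun t ω => (hQinv t ω).1) fun t ω => (hQinv t ω).2
  have hψ (t : ℕ) : (fun ω => expRemainder |l * ε t ω|) =
      fun ω => exp (l * |ε t ω|) - l * |ε t ω| - 1 := by
    simp only [expRemainder, abs_mul, abs_of_pos hl]
  have hψint n : Integrable (fun ω => expRemainder |l * ε (n + 1) ω|) μ := by
    rw [hψ]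
    exact ((hmgf _ n.succ_pos).sub ((hεint _ n.succ_pos).abs.const_mul l)).sub (integrable_const 1)
  have hε₀ n : μ[fun ω => l * ε (n + 1) ω | ℱ n] =ᵐ[μ] 0 := by
    filter_upwards [condExp_smul (μ := μ) l (ε (n + 1)) (ℱ n), hε0 _ n.succ_pos] with ω hsmul hω
    exact hsmul.trans (by simpa using Or.inr hω)
  have hsum t ω : noiseSum X (fun t ω => l * ε t ω) t ω =
      l • ∑ i ∈ Finset.Icc 1 t, ε i ω • X i ω := by
    simp only [noiseSum, mul_smul, Finset.smul_sum]
  have hcomp t ω : noiseCompensator μ ℱ X Qinv (fun t ω => l * ε t ω) t ω =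
      ∑ i ∈ Finset.Icc 1 t, e i ω := by
    simp only [noiseCompensator, hψ, he]
  simpa only [hsum, hcomp, map_smul, norm_smul, norm_of_nonneg hl.le, le_div_iff₀' hl] using
    ofReal_one_sub_le_measure_forall_norm_le (ε := fun t ω => l * ε t ω) hR hX'
      (fun n => (hεmeas _ n.succ_pos).const_mul l) (fun n => (hεint _ n.succ_pos).const_mul l)
      hε₀ hψint hδ

end TailBound

theorem stmt_1
    {H : Type*} [NormedAddCommGroup H] [InnerProductSpace ℝ H] [CompleteSpace H]
    [SecondCountableTopology H]
    {Ω : Type*} {m0 : MeasurableSpace Ω} {μ : Measure Ω} [IsProbabilityMeasure μ]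
    (ℱ : Filtration ℕ m0)
    (X : ℕ → Ω → H) (ε : ℕ → Ω → ℝ)
    (hX : ∀ t, 1 ≤ t → StronglyMeasurable[ℱ (t - 1)] (X t))
    (hεmeas : ∀ t, 1 ≤ t → StronglyMeasurable[ℱ t] (ε t))
    (hεint : ∀ t, 1 ≤ t → Integrable (ε t) μ)
    (hε0 : ∀ t, 1 ≤ t → μ[ε t | ℱ (t - 1)] =ᵐ[μ] 0)
    (ρ : ℝ) (hρ : 0 < ρ)
    (Q Qinv : ℕ → Ω → H →L[ℝ] H)
    (hQpos : ∀ t ω, (Q t ω).IsPositive)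
    (hQsq : ∀ t ω, Q t ω ∘L Q t ω =
      ρ • (1 : H →L[ℝ] H) + ∑ i ∈ Finset.Icc 1 t, outerProd (X i ω))
    (hQinv : ∀ t ω, Qinv t ω ∘L Q t ω = 1 ∧ Q t ω ∘L Qinv t ω = 1)
    (l : ℝ) (hl : 0 < l)
    (hmgf : ∀ t, 1 ≤ t → Integrable (fun ω => Real.exp (l * |ε t ω|)) μ)
    (e : ℕ → Ω → ℝ)
    (he : ∀ t ω, e t ω = ‖Qinv t ω (X t ω)‖ ^ 2 *
      (μ[fun ω' => Real.exp (l * |ε t ω'|) - l * |ε t ω'| - 1 | ℱ (t - 1)]) ω)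
    (δ : ℝ) (hδ : δ ∈ Set.Ioo (0 : ℝ) 1) :
    ENNReal.ofReal (1 - δ) ≤
      μ {ω | ∀ t, 1 ≤ t →
        ‖Qinv t ω (∑ i ∈ Finset.Icc 1 t, ε i ω • X i ω)‖ ≤
          ((∑ i ∈ Finset.Icc 1 t, e i ω) + Real.log (2 / δ)) / l} :=
  (stmt_1_general X ε hX hεmeas hεint hε0 _ Q Qinv (fun t ω => (hQpos t ω).isSymmetric) hQsq hQinv
    l hl hmgf e he δ hδ.1).trans (measure_mono fun _ hω t _ => hω t)
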